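/- Let k be a field of characteristic different from 2 and let q₁, q₂, q₃ ∈ k[x,z] be binary quadratic forms. Then Σ_{i=1}^{3} Σ_{j=1}^{3} (q_i,q_j)₂ · q_i* · q_j* = 0 in k[x,z]; in other words, the point (q₁*(x,z) : q₂*(x,z) : q₃*(x,z)) always lies on the conic Σ_{i,j} A_{ij}·X_i·X_j = 0 with A_{ij} = (q_i,q_j)₂. -/

import Mathlib

open MvPolynomial

/-- Iterated partial derivative in the variable `x` (the variable `0`). -/
noncomputable def dX {k : Type*} [CommSemiring k] (n : ℕ) (p : MvPolynomial (Fin 2) k) :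
    MvPolynomial (Fin 2) k :=
  (fun q => pderiv (0 : Fin 2) q)^[n] p

/-- Iterated partial derivative in the variable `z` (the variable `1`). -/
noncomputable def dZ {k : Type*} [CommSemiring k] (n : ℕ) (p : MvPolynomial (Fin 2) k) :
    MvPolynomial (Fin 2) k :=
  (fun q => pderiv (1 : Fin 2) q)^[n] p

/-- The `h`-th transvectant of two binary forms of degrees `r₁` and `r₂`. -/
noncomputable def transvectant {k : Type*} [Field k] (r₁ r₂ h : ℕ)
    (f g : MvPolynomial (Fin 2) k) : MvPolynomial (Fin 2) k :=
  C ((((r₁ - h).factorial * (r₂ - h).factorial : ℕ) : k) /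
      (((r₁.factorial * r₂.factorial : ℕ)) : k)) *
    ∑ j ∈ Finset.range (h + 1),
      C ((-1 : k) ^ j * (h.choose j : k)) * (dX (h - j) (dZ j f) * dX j (dZ (h - j) g))

lemma quad_form {k : Type*} [Field k] (p : MvPolynomial (Fin 2) k) (hp : p.IsHomogeneous 2) :
    ∃ a b c : k, p = C a * X 0 ^ 2 + C b * (X 0 * X 1) + C c * X 1 ^ 2 := by
  rw [p.as_sum]
  apply Finset.sum_induction _ (fun p : MvPolynomial (Fin 2) k =>
    ∃ a b c : k, p = C a * X 0 ^ 2 + C b * (X 0 * X 1) + C c * X 1 ^ 2)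
  · rintro _ _ ⟨a, b, c, rfl⟩ ⟨a', b', c', rfl⟩
    refine ⟨a + a', b + b', c + c', ?_⟩
    simp only [map_add]
    ring
  · exact ⟨0, 0, 0, by simp⟩
  · intro d hd
    have h := hp (mem_support_iff.mp hd)
    have h2 : d 0 + d 1 = 2 := by
      rw [Finsupp.weight_apply, Finsupp.sum_fintype _ _ (by simp)] at h
      simpa [Fin.sum_univ_two] using h
    rw [monomial_eq, Finsupp.prod_fintype _ _ (by simp), Fin.prod_univ_two]
    generalize coeff d p = a
    have h3 : d 0 = 0 ∧ d 1 = 2 ∨ d 0 = 1 ∧ d 1 = 1 ∨ d 0 = 2 ∧ d 1 = 0 := by omega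
    rcases h3 with ⟨h, h'⟩ | ⟨h, h'⟩ | ⟨h, h'⟩ <;> rw [h, h']
    · exact ⟨0, 0, a, by simp⟩
    · exact ⟨0, a, 0, by simp⟩
    · exact ⟨a, 0, 0, by simp⟩

lemma pd0 {k : Type*} [Field k] (a b c : k) :
    pderiv (0 : Fin 2) (C a * X 0 ^ 2 + C b * (X 0 * X 1) + C c * X 1 ^ 2 : MvPolynomial (Fin 2) k)
      = C (2 * a) * X 0 + C b * X 1 := by
  have hc : (C 2 : MvPolynomial (Fin 2) k) = 2 := map_ofNat C 2
  simp [pderiv_X, Derivation.leibniz, Derivation.leibniz_pow, hc]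
  ring

lemma pd1 {k : Type*} [Field k] (a b c : k) :
    pderiv (1 : Fin 2) (C a * X 0 ^ 2 + C b * (X 0 * X 1) + C c * X 1 ^ 2 : MvPolynomial (Fin 2) k)
      = C b * X 0 + C (2 * c) * X 1 := by
  have hc : (C 2 : MvPolynomial (Fin 2) k) = 2 := map_ofNat C 2
  simp [pderiv_X, Derivation.leibniz, Derivation.leibniz_pow, hc]
  ring

lemma pl0 {k : Type*} [Field k] (a b : k) :
    pderiv (0 : Fin 2) (C a * X 0 + C b * X 1 : MvPolynomial (Fin 2) k) = C a := by
  simp [pderiv_X, Derivation.leibniz]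

lemma pl1 {k : Type*} [Field k] (a b : k) :
    pderiv (1 : Fin 2) (C a * X 0 + C b * X 1 : MvPolynomial (Fin 2) k) = C b := by
  simp [pderiv_X, Derivation.leibniz]

lemma tr1 {k : Type*} [Field k] (a b c a' b' c' : k) :
    transvectant 2 2 1 (C a * X 0 ^ 2 + C b * (X 0 * X 1) + C c * X 1 ^ 2)
      (C a' * X 0 ^ 2 + C b' * (X 0 * X 1) + C c' * X 1 ^ 2) =
    C (1 / 4) * ((C (2 * a) * X 0 + C b * X 1) * (C b' * X 0 + C (2 * c') * X 1)
      - (C b * X 0 + C (2 * c) * X 1) * (C (2 * a') * X 0 + C b' * X 1)) := by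
  have h : (((2 - 1).factorial * (2 - 1).factorial : ℕ) : k) /
      ((Nat.factorial 2 * Nat.factorial 2 : ℕ) : k) = 1 / 4 := by
    norm_num [Nat.factorial]
  unfold transvectant
  rw [h]
  have hc : (C 2 : MvPolynomial (Fin 2) k) = 2 := map_ofNat C 2
  simp [Finset.sum_range_succ, dX, dZ, hc]
  left
  ring

lemma tr2 {k : Type*} [Field k] (a b c a' b' c' : k) :
    transvectant 2 2 2 (C a * X 0 ^ 2 + C b * (X 0 * X 1) + C c * X 1 ^ 2)
      (C a' * X 0 ^ 2 + C b' * (X 0 * X 1) + C c' * X 1 ^ 2) =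
    C (1 / 4 * (4 * a * c' - 2 * b * b' + 4 * c * a')) := by
  have h : (((2 - 2).factorial * (2 - 2).factorial : ℕ) : k) /
      ((Nat.factorial 2 * Nat.factorial 2 : ℕ) : k) = 1 / 4 := by
    norm_num [Nat.factorial]
  unfold transvectant
  rw [h]
  simp only [Finset.sum_range_succ, Finset.sum_range_zero, dX, dZ, Function.iterate_succ,
    Function.iterate_zero, Function.comp, id, pd0, pd1, pl0, pl1, Nat.sub_self, Nat.sub_zero,
    Nat.reduceSub, Nat.choose_self, Nat.choose_zero_right, Nat.choose_one_right]
  simp only [← map_mul, ← map_add, zero_add]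
  congr 1
  push_cast
  ring

/-- For binary quadratic forms `q₀,q₁,q₂` over a field of characteristic `≠ 2`, with
`q₀* = (q₁,q₂)₁`, `q₁* = (q₂,q₀)₁`, `q₂* = (q₀,q₁)₁` and `A_{ij} = (q_i,q_j)₂` (constants),
one has `Σ_{i,j} A_{ij}·q_i*·q_j* = 0`:  the point `(q₀* : q₁* : q₂*)` always lies on the
conic `Σ_{i,j} A_{ij}·X_i·X_j = 0`. -/
theorem statement7 {k : Type*} [Field k] (hchar : (2 : k) ≠ 0)
    (q : Fin 3 → MvPolynomial (Fin 2) k) (hq : ∀ i, (q i).IsHomogeneous 2) :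
    ∑ i : Fin 3, ∑ j : Fin 3,
      C (constantCoeff (transvectant 2 2 2 (q i) (q j))) *
        transvectant 2 2 1 (q (i + 1)) (q (i + 2)) *
        transvectant 2 2 1 (q (j + 1)) (q (j + 2)) = 0 := by
  obtain ⟨a0, b0, c0, h0⟩ := quad_form _ (hq 0)
  obtain ⟨a1, b1, c1, h1⟩ := quad_form _ (hq 1)
  obtain ⟨a2, b2, c2, h2⟩ := quad_form _ (hq 2)
  have e1 : (1 : Fin 3) + 1 = 2 := rfl
  have e2 : (1 : Fin 3) + 2 = 0 := rfl
  have e3 : (2 : Fin 3) + 1 = 0 := rfl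
  have e4 : (2 : Fin 3) + 2 = 1 := rfl
  simp only [Fin.sum_univ_three, zero_add, e1, e2, e3, e4, h0, h1, h2, tr1, tr2, constantCoeff_C]
  generalize (1 / 4 : k) = s
  simp only [map_mul, map_add, map_sub, map_ofNat]
  ring
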